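/- arXiv:1211.4426 — 2 statements merged into one kernel-verified Lean document; each statement's English description precedes it below -/
import Mathlib

section
/- Let K > 0. In the Hilbert space L²_ℂ(ℝ), let p₀ be the densely-defined linear operator with domain C₀^∞(ℝ,ℂ) given by p₀ f = (i/K) f′, and let A₀ be the densely-defined linear operator with domain C₀^∞(ℝ,ℂ) given by A₀ f = −(1/K²) f″. Both operators are closable; let p̄ and Ā denote their closures (as operators in L²_ℂ(ℝ)). Then p̄² = Ā, i.e., the operator with domain { f ∈ D(p̄) : p̄ f ∈ D(p̄) } acting as f ↦ p̄(p̄ f) coincides (same domain and same action) with Ā. -/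
open MeasureTheory

/-!
Both operators are symmetric on the common domain `D = C₀^∞`, `p₀` maps `D` into itself, and
`p₀² = A₀` on `D`. The proof works with the closures of the graphs.

* `Ā ⊆ p̄²`: since `‖p₀ u‖² = ⟪A₀ u, u⟫ ≤ ‖A₀ u‖ ‖u‖` on `D`, convergence of `uₙ` and `A₀ uₙ` forces
  `p₀ uₙ` to be Cauchy; its limit `z` satisfies `p̄ x = z` and `p̄ z = Ā x`.
* `p̄² ⊆ Ā`: suppose that `A₀ + 1` has dense range. Given `p̄ p̄ x = y`, choose `uₙ ∈ D` with
  `(A₀ + 1) uₙ → y + x`. As `‖u‖ ≤ ‖(A₀ + 1) u‖`, the sequence converges to some `x'` with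
  `(Ā + 1) x' = y + x`. By the first inclusion `w = x - x'` satisfies `p̄² w = -w`, so
  `-‖w‖² = ‖p̄ w‖² ≥ 0` and `x = x'`.

This is `abstract_sq`, valid in any complex Hilbert space. The analytic input is the density of the
range of `A₀ + 1`. If `v` is orthogonal to it, then `u = conj v` annihilates `φ - K⁻² φ''` for all
test functions `φ`; by cutting off (`weak_extend`) the same holds for Schwartz `φ`. The Fourier
transform solves `φ - K⁻² φ'' = g` in the Schwartz space for every Schwartz `g`
(`exists_schwartz_resolvent`), so `u` annihilates every test function and vanishes.
-/

open Filter Topology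
open scoped SchwartzMap Laplacian

/-! ### Closures of symmetric operators in a Hilbert space -/

section
variable {H : Type*} [NormedAddCommGroup H] [InnerProductSpace ℂ H]

/-- A densely defined symmetric operator is contained in its adjoint, which is closed. -/
lemma isClosable_of_symm [CompleteSpace H] (T : H →ₗ.[ℂ] H) (hd : Dense (T.domain : Set H))
    (hs : ∀ x y : T.domain, inner ℂ (T x) (y : H) = inner ℂ (x : H) (T y)) : T.IsClosable :=
  LinearPMap.isClosable_iff_exists_closed_extension.2
    ⟨T.adjoint, LinearPMap.adjoint_isClosed hd,
      LinearPMap.IsFormalAdjoint.le_adjoint hd (fun x y => hs x y)⟩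

lemma mem_closure_graph_iff (T : H →ₗ.[ℂ] H) (x y : H) :
    (x, y) ∈ T.graph.topologicalClosure ↔
      ∃ u : ℕ → T.domain, Tendsto (fun n => (u n : H)) atTop (𝓝 x) ∧
        Tendsto (fun n => T (u n)) atTop (𝓝 y) := by
  rw [← SetLike.mem_coe, Submodule.topologicalClosure_coe, mem_closure_iff_seq_limit]
  constructor
  · rintro ⟨v, hv, hlim⟩
    have h : ∀ n, ∃ u : T.domain, (u : H) = (v n).1 ∧ T u = (v n).2 := fun n =>
      (LinearPMap.mem_graph_iff T).1 (hv n)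
    choose u hu1 hu2 using h
    refine ⟨u, ?_, ?_⟩
    · simpa only [hu1, Function.comp_def] using (continuous_fst.tendsto _).comp hlim
    · simpa only [hu2, Function.comp_def] using (continuous_snd.tendsto _).comp hlim
  · rintro ⟨u, h1, h2⟩
    exact ⟨fun n => ((u n : H), T (u n)), fun n => T.mem_graph (u n), h1.prodMk_nhds h2⟩

/-- Symmetry passes from an operator to the closure of its graph. -/
lemma closure_graph_symm (T : H →ₗ.[ℂ] H)
    (hs : ∀ x y : T.domain, inner ℂ (T x) (y : H) = inner ℂ (x : H) (T y)) {x y x' y' : H}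
    (h : (x, y) ∈ T.graph.topologicalClosure) (h' : (x', y') ∈ T.graph.topologicalClosure) :
    inner ℂ y x' = inner ℂ x y' := by
  obtain ⟨u, hu1, hu2⟩ := (mem_closure_graph_iff T x y).1 h
  obtain ⟨v, hv1, hv2⟩ := (mem_closure_graph_iff T x' y').1 h'
  refine tendsto_nhds_unique (hu2.inner (𝕜 := ℂ) hv1) ?_
  simpa only [hs] using hu1.inner (𝕜 := ℂ) hv2

lemma closure_mem_iff {T : H →ₗ.[ℂ] H} (hT : T.IsClosable) (x y : H) :
    (x, y) ∈ T.graph.topologicalClosure ↔ ∃ hx : x ∈ T.closure.domain, T.closure ⟨x, hx⟩ = y := by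
  rw [hT.graph_closure_eq_closure_graph, LinearPMap.mem_graph_iff]
  constructor
  · rintro ⟨⟨z, hz⟩, rfl, rfl⟩
    exact ⟨hz, rfl⟩
  · rintro ⟨hx, rfl⟩
    exact ⟨⟨x, hx⟩, rfl, rfl⟩

/-- If `p` is symmetric, maps its domain into itself, `A = p²` on that domain and `A + 1` has dense
range, then `p` and `A` are closable and the square of the closure of `p` is the closure of `A`. -/
lemma abstract_sq [CompleteSpace H] (p A : H →ₗ.[ℂ] H) (hdom : ∀ x, x ∈ A.domain ↔ x ∈ p.domain)
    (hpp : ∀ (x : p.domain) (y : A.domain), (x : H) = y →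
      ∃ h : p x ∈ p.domain, p ⟨p x, h⟩ = A y)
    (hs : ∀ x y : p.domain, inner ℂ (p x) (y : H) = inner ℂ (x : H) (p y))
    (hr : Dense {z : H | ∃ x : A.domain, A x + x = z}) :
    p.IsClosable ∧ A.IsClosable ∧
    (∀ x : H, (∃ hx : x ∈ p.closure.domain, p.closure ⟨x, hx⟩ ∈ p.closure.domain)
        ↔ x ∈ A.closure.domain) ∧
    (∀ (x : H) (hx : x ∈ p.closure.domain)
        (hx₂ : p.closure ⟨x, hx⟩ ∈ p.closure.domain) (hxA : x ∈ A.closure.domain),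
      p.closure ⟨p.closure ⟨x, hx⟩, hx₂⟩ = A.closure ⟨x, hxA⟩) := by
  have hAD : ∀ x : A.domain, A x ∈ A.domain := by
    intro x
    obtain ⟨h, e⟩ := hpp ⟨x, (hdom _).1 x.2⟩ x rfl
    obtain ⟨h', -⟩ := hpp ⟨_, h⟩ ⟨_, (hdom _).2 h⟩ rfl
    rw [hdom, ← e]; exact h'
  -- The range of `A + 1` lies in the domain, so the domain is itself dense.
  have hdA : Dense (A.domain : Set H) := hr.mono (by
    rintro z ⟨x, rfl⟩
    exact A.domain.add_mem (hAD x) x.2)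
  have hdp : Dense (p.domain : Set H) := hdA.mono fun x hx => (hdom x).1 hx
  have hAp : ∀ x y : A.domain,
      inner ℂ (A x) (y : H) = inner ℂ (p ⟨x, (hdom _).1 x.2⟩) (p ⟨y, (hdom _).1 y.2⟩) := by
    intro x y
    obtain ⟨h, e⟩ := hpp ⟨x, (hdom _).1 x.2⟩ x rfl
    rw [← e]
    exact hs ⟨_, h⟩ ⟨y, (hdom _).1 y.2⟩
  have hsA : ∀ x y : A.domain, inner ℂ (A x) (y : H) = inner ℂ (x : H) (A y) := by
    intro x y
    rw [hAp, ← inner_conj_symm, ← hAp, inner_conj_symm]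
  have hpc := isClosable_of_symm p hdp hs
  have hAc := isClosable_of_symm A hdA hsA
  have hnorm : ∀ x : A.domain, ‖p ⟨x, (hdom _).1 x.2⟩‖ ^ 2 = RCLike.re (inner ℂ (A x) (x : H)) := by
    intro x
    rw [hAp, ← norm_sq_eq_re_inner]
  have hbd1 : ∀ x : A.domain, ‖p ⟨x, (hdom _).1 x.2⟩‖ ≤ ‖(x : H)‖ + ‖A x‖ := by
    intro x
    have h1 := hnorm x
    have h2 := re_inner_le_norm (𝕜 := ℂ) (A x) (x : H)
    have := norm_nonneg (x : H)
    have := norm_nonneg (A x)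
    apply le_of_sq_le_sq _ (by positivity)
    nlinarith
  have hbd2 : ∀ x : A.domain, ‖(x : H)‖ ≤ ‖A x + x‖ := by
    intro x
    have h1 := hnorm x
    have h2 := re_inner_le_norm (𝕜 := ℂ) (A x + x) (x : H)
    rw [inner_add_left, map_add, ← norm_sq_eq_re_inner (𝕜 := ℂ)] at h2
    by_contra! hlt
    have := norm_nonneg (A x + x)
    nlinarith [sq_nonneg ‖p ⟨x, (hdom _).1 x.2⟩‖]
  have hfwd : ∀ x y : H, (x, y) ∈ A.graph.topologicalClosure →
      ∃ z, (x, z) ∈ p.graph.topologicalClosure ∧ (z, y) ∈ p.graph.topologicalClosure := by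
    intro x y h
    obtain ⟨u, hu1, hu2⟩ := (mem_closure_graph_iff A x y).1 h
    set v : ℕ → p.domain := fun n => ⟨u n, (hdom _).1 (u n).2⟩ with hv
    have hcs : CauchySeq fun n => p (v n) := by
      rw [cauchySeq_iff_tendsto_dist_atTop_0]
      have c1 := cauchySeq_iff_tendsto_dist_atTop_0.1 hu1.cauchySeq
      have c2 := cauchySeq_iff_tendsto_dist_atTop_0.1 hu2.cauchySeq
      refine squeeze_zero (fun _ => dist_nonneg) (fun n => ?_) (by simpa using c1.add c2)
      have := hbd1 (u n.1 - u n.2)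
      rw [LinearPMap.map_sub] at this
      rw [dist_eq_norm, dist_eq_norm, dist_eq_norm, ← LinearPMap.map_sub]
      exact this
    obtain ⟨z, hz⟩ := cauchySeq_tendsto_of_complete hcs
    refine ⟨z, (mem_closure_graph_iff p x z).2 ⟨v, hu1, hz⟩, ?_⟩
    choose h e using fun n => hpp (v n) (u n) rfl
    refine (mem_closure_graph_iff p z y).2 ⟨fun n => ⟨p (v n), h n⟩, hz, ?_⟩
    simpa only [e] using hu2
  have hbwd : ∀ x z y : H, (x, z) ∈ p.graph.topologicalClosure →
      (z, y) ∈ p.graph.topologicalClosure → (x, y) ∈ A.graph.topologicalClosure := by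
    intro x z y hxz hzy
    obtain ⟨w, hw, hlim⟩ := mem_closure_iff_seq_limit.1 (hr (y + x))
    choose u hu using hw
    have hcs : CauchySeq fun n => (u n : H) := by
      rw [cauchySeq_iff_tendsto_dist_atTop_0]
      have c1 := cauchySeq_iff_tendsto_dist_atTop_0.1 hlim.cauchySeq
      refine squeeze_zero (fun _ => dist_nonneg) (fun n => ?_) c1
      have := hbd2 (u n.1 - u n.2)
      rw [LinearPMap.map_sub] at this
      rw [dist_eq_norm, dist_eq_norm, ← hu, ← hu]
      refine this.trans_eq ?_
      congr 1
      push_cast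
      abel
    obtain ⟨x', hx'⟩ := cauchySeq_tendsto_of_complete hcs
    have hA' : (x', y + x - x') ∈ A.graph.topologicalClosure := by
      refine (mem_closure_graph_iff A _ _).2 ⟨u, hx', ?_⟩
      refine (hlim.sub hx').congr fun n => ?_
      rw [← hu]; abel
    obtain ⟨z', h1, h2⟩ := hfwd _ _ hA'
    have d1 := Submodule.sub_mem _ hxz h1
    have d2 := Submodule.sub_mem _ hzy h2
    rw [Prod.mk_sub_mk] at d1 d2
    -- With `w = x - x'`, symmetry of the closure gives `-⟪w, w⟫ = ⟪z - z', z - z'⟫`.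
    have key := closure_graph_symm p hs d2 d1
    have e : y - (y + x - x') = -(x - x') := by abel
    rw [e, inner_neg_left] at key
    have key2 := congrArg RCLike.re key
    rw [map_neg, ← norm_sq_eq_re_inner (𝕜 := ℂ), ← norm_sq_eq_re_inner (𝕜 := ℂ)] at key2
    have h0 : x - x' = 0 := norm_eq_zero.1 (by
      nlinarith [sq_nonneg ‖x - x'‖, sq_nonneg ‖z - z'‖])
    have h0 : x = x' := sub_eq_zero.1 h0
    subst h0
    simpa using hA'
  refine ⟨hpc, hAc, fun x => ⟨?_, fun hx => ?_⟩, fun x hx hx₂ hxA => ?_⟩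
  · rintro ⟨hx, hx₂⟩
    have := hbwd x _ _ ((closure_mem_iff hpc _ _).2 ⟨hx, rfl⟩)
      ((closure_mem_iff hpc _ _).2 ⟨hx₂, rfl⟩)
    exact ((closure_mem_iff hAc _ _).1 this).1
  · obtain ⟨z, h1, h2⟩ := hfwd x _ ((closure_mem_iff hAc _ _).2 ⟨hx, rfl⟩)
    obtain ⟨hx1, rfl⟩ := (closure_mem_iff hpc _ _).1 h1
    exact ⟨hx1, ((closure_mem_iff hpc _ _).1 h2).1⟩
  · have := hbwd x _ _ ((closure_mem_iff hpc _ _).2 ⟨hx, rfl⟩)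
      ((closure_mem_iff hpc _ _).2 ⟨hx₂, rfl⟩)
    exact ((closure_mem_iff hAc _ _).1 this).2.symm
end

/-! ### Density of the range -/

/-- The equation `f - a² f'' = g` is solvable in the Schwartz space: `f` is obtained from `g` by the
Fourier multiplier `ξ ↦ (1 + (2πaξ)²)⁻¹`. -/
lemma exists_schwartz_resolvent (a : ℝ) (g : 𝓢(ℝ, ℂ)) :
    ∃ f : 𝓢(ℝ, ℂ), ∀ x, f x - (a : ℂ) ^ 2 * deriv (deriv f) x = g x := by
  set m : ℝ → ℝ := fun ξ => (1 + ‖(2 * Real.pi * a) * ξ‖ ^ 2) ^ (-1 : ℝ) with hm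
  have hmt : m.HasTemperateGrowth :=
    (Function.hasTemperateGrowth_one_add_norm_sq_rpow ℝ (-1)).comp
      (f := fun ξ : ℝ => (2 * Real.pi * a) * ξ) (by fun_prop)
  have hn : (fun ξ : ℝ => ‖ξ‖ ^ 2).HasTemperateGrowth := by fun_prop
  set f := SchwartzMap.fourierMultiplierCLM ℂ m g with hf
  have h1 : f - (a ^ 2) • Δ f = g := by
    have hsum := SchwartzMap.fourierMultiplierCLM_sum (𝕜 := ℝ) (E := ℝ) ℂ (s := Finset.univ)
      (g := ![m, ((2 * Real.pi * a) ^ 2) • ((fun ξ : ℝ => ‖ξ‖ ^ 2) * m)]) (by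
        intro i _
        fin_cases i
        · exact hmt
        · exact (Function.HasTemperateGrowth.const _).smul (hn.mul hmt))
    have hone : (fun ξ => ∑ i, (![m, ((2 * Real.pi * a) ^ 2) • ((fun ξ : ℝ => ‖ξ‖ ^ 2) * m)]
        : Fin 2 → ℝ → ℝ) i ξ) = fun _ => (1 : ℝ) := by
      funext ξ
      have : 1 + (2 * Real.pi * a * ξ) ^ 2 ≠ 0 := by positivity
      simp only [Fin.sum_univ_two, Matrix.cons_val_zero, Matrix.cons_val_one, Pi.smul_apply,
        Pi.mul_apply, smul_eq_mul, hm, Real.rpow_neg_one, Real.norm_eq_abs, sq_abs]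
      field_simp
    rw [hone, Fin.sum_univ_two] at hsum
    have := DFunLike.congr_fun hsum g
    simp only [SchwartzMap.fourierMultiplierCLM_const, Matrix.cons_val_zero, Matrix.cons_val_one,
      one_smul, ContinuousLinearMap.id_apply, add_apply] at this
    rw [SchwartzMap.fourierMultiplierCLM_smul (hn.mul hmt), smul_apply,
      ← SchwartzMap.fourierMultiplierCLM_fourierMultiplierCLM_apply hn hmt, ← hf] at this
    rw [SchwartzMap.laplacian_eq_fourierMultiplierCLM]
    conv_rhs => rw [this]
    rw [smul_smul, sub_eq_add_neg, ← neg_smul]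
    congr 2
    ring
  refine ⟨f, fun x => ?_⟩
  have h2 := DFunLike.congr_fun h1 x
  rw [sub_apply, smul_apply, SchwartzMap.laplacian_apply,
    InnerProductSpace.laplacian_eq_iteratedDeriv_real] at h2
  rw [← h2, iteratedDeriv_succ, iteratedDeriv_one, Complex.real_smul]
  push_cast
  rfl

lemma deriv2_cutoff {ψ f : ℝ → ℂ} (hψ : ContDiff ℝ (⊤ : ℕ∞) ψ) (hf : ContDiff ℝ (⊤ : ℕ∞) f)
    (ε x : ℝ) :
    deriv (deriv fun y => ψ (ε * y) * f y) x =
      (ε : ℂ) ^ 2 * deriv (deriv ψ) (ε * x) * f x + 2 * ε * deriv ψ (ε * x) * deriv f x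
        + ψ (ε * x) * deriv (deriv f) x := by
  have hψ' : ContDiff ℝ (⊤ : ℕ∞) (deriv ψ) := hψ.iterate_deriv 1
  have hf' : ContDiff ℝ (⊤ : ℕ∞) (deriv f) := hf.iterate_deriv 1
  have key : ∀ {g : ℝ → ℂ}, ContDiff ℝ (⊤ : ℕ∞) g → ∀ y,
      HasDerivAt (fun y => g (ε * y)) ((ε : ℂ) * deriv g (ε * y)) y := by
    intro g hg y
    have h1 : HasDerivAt g (deriv g (ε * y)) (ε * y) :=
      ((hg.differentiable (by simp)) _).hasDerivAt
    have h2 : HasDerivAt (fun y : ℝ => ε * y) ε y := by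
      simpa using (hasDerivAt_id y).const_mul ε
    simpa [Function.comp_def] using h1.scomp y h2
  have hd : ∀ {g : ℝ → ℂ}, ContDiff ℝ (⊤ : ℕ∞) g → ∀ y, HasDerivAt g (deriv g y) y :=
    fun hg y => ((hg.differentiable (by simp)) _).hasDerivAt
  have e1 : (deriv fun y => ψ (ε * y) * f y) =
      fun y => (ε : ℂ) * deriv ψ (ε * y) * f y + ψ (ε * y) * deriv f y :=
    funext fun y => ((key hψ y).mul (hd hf y)).deriv
  rw [e1]
  refine ((((key hψ' x).const_mul (ε : ℂ)).mul (hd hf x)).add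
    ((key hψ x).mul (hd hf' x))).deriv.trans ?_
  ring

/-- A weak equation tested against compactly supported smooth functions may be tested against a
Schwartz function `f`: use the cutoffs `x ↦ ψ (ε x) f x`, where `ψ` is a bump equal to `1` near `0`,
and let `ε → 0` by dominated convergence. -/
lemma weak_extend {u : ℝ → ℂ} (hu : MemLp u 2 volume) (c : ℂ)
    (h : ∀ φ : ℝ → ℂ, ContDiff ℝ (⊤ : ℕ∞) φ → HasCompactSupport φ →
      ∫ x, u x * (φ x - c * deriv (deriv φ) x) = 0) (f : 𝓢(ℝ, ℂ)) :
    ∫ x, u x * (f x - c * deriv (deriv f) x) = 0 := by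
  let χ : ContDiffBump (0 : ℝ) := ⟨1, 2, one_pos, one_lt_two⟩
  set ψ : ℝ → ℂ := fun x => (χ x : ℂ) with hψdef
  have hψ : ContDiff ℝ (⊤ : ℕ∞) ψ := Complex.ofRealCLM.contDiff.comp χ.contDiff
  have hψc : HasCompactSupport ψ := χ.hasCompactSupport.comp_left (g := Complex.ofReal) rfl
  have hψ0 : ψ 0 = 1 := by
    have : χ 0 = 1 := χ.one_of_mem_closedBall (by simp [χ])
    simp [hψdef, this]
  have hψ1 : ContDiff ℝ (⊤ : ℕ∞) (deriv ψ) := hψ.iterate_deriv 1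
  have hψ2 : ContDiff ℝ (⊤ : ℕ∞) (deriv (deriv ψ)) := hψ.iterate_deriv 2
  obtain ⟨C0, hC0⟩ := hψc.exists_bound_of_continuous hψ.continuous
  obtain ⟨C1, hC1⟩ := hψc.deriv.exists_bound_of_continuous hψ1.continuous
  obtain ⟨C2, hC2⟩ := hψc.deriv.deriv.exists_bound_of_continuous hψ2.continuous
  have hC0' := (norm_nonneg _).trans (hC0 0)
  have hC1' := (norm_nonneg _).trans (hC1 0)
  have hC2' := (norm_nonneg _).trans (hC2 0)
  have hfs : ContDiff ℝ (⊤ : ℕ∞) f := f.smooth _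
  set f1 := SchwartzMap.derivCLM ℂ ℂ f with hf1
  set f2 := SchwartzMap.derivCLM ℂ ℂ f1 with hf2
  have e1 : deriv f = f1 := funext fun x => by rw [hf1, SchwartzMap.derivCLM_apply]
  have e2 : deriv (deriv f) = f2 := by
    rw [e1]; exact funext fun x => by rw [hf2, SchwartzMap.derivCLM_apply]
  set ε : ℕ → ℝ := fun n => 1 / ((n : ℝ) + 1) with hε
  have hε0 : Tendsto ε atTop (𝓝 0) := tendsto_one_div_add_atTop_nhds_zero_nat
  have hε1 : ∀ n, ‖(ε n : ℂ)‖ ≤ 1 := by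
    intro n
    rw [Complex.norm_real, Real.norm_of_nonneg (by positivity), hε]
    exact div_le_one_of_le₀ (by linarith [(Nat.cast_nonneg n : (0 : ℝ) ≤ n)]) (by positivity)
  have hεC : Tendsto (fun n => (ε n : ℂ)) atTop (𝓝 0) := by
    simpa [Function.comp_def] using (Complex.continuous_ofReal.tendsto 0).comp hε0
  set F : ℕ → ℝ → ℂ := fun n x => u x * (ψ (ε n * x) * f x - c * ((ε n : ℂ) ^ 2 *
    deriv (deriv ψ) (ε n * x) * f x + 2 * ε n * deriv ψ (ε n * x) * f1 x
        + ψ (ε n * x) * f2 x)) with hF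
  have hF0 : ∀ n, ∫ x, F n x = 0 := by
    intro n
    have hεn : ε n ≠ 0 := by rw [hε]; positivity
    have := h (fun y => ψ (ε n * y) * f y)
      ((hψ.comp (contDiff_const.mul contDiff_id)).mul hfs)
      (HasCompactSupport.mul_right (hψc.comp_homeomorph (Homeomorph.mulLeft₀ (ε n) hεn)))
    simp only [deriv2_cutoff hψ hfs, e2] at this
    rw [e1] at this
    exact this
  set B : ℝ → ℝ := fun x => ‖u x‖ * (C0 * ‖f x‖ + ‖c‖ * (C2 * ‖f x‖ + 2 * C1 * ‖f1 x‖
    + C0 * ‖f2 x‖)) with hB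
  have hBint : Integrable B := by
    refine hu.norm.integrable_mul (q := 2) ?_
    have m0 := (f.memLp 2 volume).norm
    have m1 := (f1.memLp 2 volume).norm
    have m2 := (f2.memLp 2 volume).norm
    exact (m0.const_mul C0).add ((((m0.const_mul C2).add (m1.const_mul (2 * C1))).add
      (m2.const_mul C0)).const_mul ‖c‖)
  have hlim : Tendsto (fun n => ∫ x, F n x) atTop
      (𝓝 (∫ x, u x * (f x - c * deriv (deriv f) x))) := by
    refine tendsto_integral_of_dominated_convergence B (fun n => ?_) hBint
      (fun n => ae_of_all _ fun x => ?_) (ae_of_all _ fun x => ?_)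
    · refine hu.1.mul (Continuous.aestronglyMeasurable ?_)
      have := hψ.continuous
      have := hψ1.continuous
      have := hψ2.continuous
      have := f.continuous
      have := f1.continuous
      have := f2.continuous
      fun_prop
    · rw [hF, hB]
      simp only [norm_mul]
      refine mul_le_mul_of_nonneg_left ?_ (norm_nonneg _)
      refine (norm_sub_le _ _).trans (add_le_add ?_ ?_)
      · rw [norm_mul]; gcongr; exact hC0 _
      · rw [norm_mul]
        gcongr
        refine (norm_add₃_le).trans (add_le_add (add_le_add ?_ ?_) ?_)
        · rw [norm_mul, norm_mul, norm_pow]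
          gcongr
          calc _ ≤ 1 * C2 := mul_le_mul (pow_le_one₀ (norm_nonneg _) (hε1 n)) (hC2 _)
                  (norm_nonneg _) zero_le_one
            _ = C2 := one_mul _
        · rw [norm_mul, norm_mul, norm_mul, Complex.norm_two]
          gcongr
          · linarith [hε1 n]
          · exact hC1 _
        · rw [norm_mul]; gcongr; exact hC0 _
    · have hx : Tendsto (fun n => ε n * x) atTop (𝓝 0) := by simpa using hε0.mul_const x
      have t0 := (hψ.continuous.tendsto 0).comp hx
      have t1 := (hψ1.continuous.tendsto 0).comp hx
      have t2 := (hψ2.continuous.tendsto 0).comp hx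
      have := ((t0.mul_const (f x)).sub
        (((((hεC.pow 2).mul t2).mul_const (f x)).add (((hεC.const_mul 2).mul t1).mul_const
          (f1 x))).add (t0.mul_const (f2 x)) |>.const_mul c)).const_mul (u x)
      rw [hψ0] at this
      rw [e2]
      simpa [hF, Function.comp_def] using this
  simp only [hF0] at hlim
  exact (tendsto_nhds_unique hlim tendsto_const_nhds)

/-- The only weak solution of `u - a² u'' = 0` in `L²` is zero. -/
lemma weak_zero {u : ℝ → ℂ} (hu : MemLp u 2 volume) (a : ℝ)
    (h : ∀ φ : ℝ → ℂ, ContDiff ℝ (⊤ : ℕ∞) φ → HasCompactSupport φ →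
      ∫ x, u x * (φ x - (a : ℂ) ^ 2 * deriv (deriv φ) x) = 0) : u =ᵐ[volume] 0 := by
  refine ae_eq_zero_of_integral_contDiff_smul_eq_zero (hu.locallyIntegrable (by norm_num)) ?_
  intro g hg hgc
  have hs : ContDiff ℝ (⊤ : ℕ∞) fun x => (g x : ℂ) := Complex.ofRealCLM.contDiff.comp hg
  have hc : HasCompactSupport fun x => (g x : ℂ) := hgc.comp_left (g := Complex.ofReal) rfl
  obtain ⟨f, hf⟩ := exists_schwartz_resolvent a (hc.toSchwartzMap hs)
  have := weak_extend hu _ h f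
  simp only [hf] at this
  rw [← this]
  refine integral_congr_ae (ae_of_all _ fun x => ?_)
  simp only [HasCompactSupport.toSchwartzMap_toFun, Complex.real_smul]
  exact mul_comm _ _

/-! ### The momentum operator and the Laplacian -/

lemma integral_deriv_parts {f g : ℝ → ℂ} (hf : ContDiff ℝ (⊤ : ℕ∞) f) (hfc : HasCompactSupport f)
    (hg : ContDiff ℝ (⊤ : ℕ∞) g) :
    ∫ x, g x * (starRingEnd ℂ) (deriv f x) = - ∫ x, deriv g x * (starRingEnd ℂ) (f x) := by
  have hd : ∀ {g : ℝ → ℂ}, ContDiff ℝ (⊤ : ℕ∞) g → ∀ y, HasDerivAt g (deriv g y) y :=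
    fun hg y => ((hg.differentiable (by simp)) _).hasDerivAt
  have hf' : ContDiff ℝ (⊤ : ℕ∞) (deriv f) := hf.iterate_deriv 1
  have hg' : ContDiff ℝ (⊤ : ℕ∞) (deriv g) := hg.iterate_deriv 1
  have hc0 : HasCompactSupport fun x => (starRingEnd ℂ) (f x) :=
    hfc.comp_left (g := starRingEnd ℂ) (map_zero _)
  have hc1 : HasCompactSupport fun x => (starRingEnd ℂ) (deriv f x) :=
    hfc.deriv.comp_left (g := starRingEnd ℂ) (map_zero _)
  have c0 := Complex.continuous_conj.comp hf.continuous
  have c1 := Complex.continuous_conj.comp hf'.continuous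
  refine integral_mul_deriv_eq_deriv_mul_of_integrable (u := g)
    (v := fun x => (starRingEnd ℂ) (f x)) (fun x _ => hd hg x) (fun x _ => ?_) ?_ ?_ ?_
  · exact (hd hf x).star
  · exact (hg.continuous.mul c1).integrable_of_hasCompactSupport hc1.mul_left
  · exact (hg'.continuous.mul c0).integrable_of_hasCompactSupport hc0.mul_left
  · exact (hg.continuous.mul c0).integrable_of_hasCompactSupport hc0.mul_left

/-- In `L²_ℂ(ℝ)`, let `p₀` be the densely-defined operator with domain
(the classes of) `C₀^∞(ℝ,ℂ)` acting by `f ↦ (i/K)f′`, and `A₀` the one acting by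
`f ↦ −(1/K²)f″`. Both are closable, and the square of the closure `p̄` of `p₀`
(with its natural domain `{f ∈ D(p̄) : p̄f ∈ D(p̄)}`) coincides with the closure `Ā`
of `A₀`: same domain and same action. -/
theorem momentum_squared_equals_laplacian (K : ℝ) (hK : 0 < K)
    (p₀ A₀ : Lp ℂ 2 (volume : Measure ℝ) →ₗ.[ℂ] Lp ℂ 2 (volume : Measure ℝ))
    (hp_dom : ∀ x : Lp ℂ 2 (volume : Measure ℝ),
      x ∈ p₀.domain ↔ ∃ f : ℝ → ℂ, ContDiff ℝ (⊤ : ℕ∞) f ∧ HasCompactSupport f ∧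
        (x : ℝ → ℂ) =ᵐ[volume] f)
    (hp_apply : ∀ (x : p₀.domain) (f : ℝ → ℂ), ContDiff ℝ (⊤ : ℕ∞) f → HasCompactSupport f →
      ((x : Lp ℂ 2 (volume : Measure ℝ)) : ℝ → ℂ) =ᵐ[volume] f →
      ((p₀ x : Lp ℂ 2 (volume : Measure ℝ)) : ℝ → ℂ)
        =ᵐ[volume] fun ξ => (Complex.I / (K : ℂ)) * deriv f ξ)
    (hA_dom : ∀ x : Lp ℂ 2 (volume : Measure ℝ),
      x ∈ A₀.domain ↔ ∃ f : ℝ → ℂ, ContDiff ℝ (⊤ : ℕ∞) f ∧ HasCompactSupport f ∧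
        (x : ℝ → ℂ) =ᵐ[volume] f)
    (hA_apply : ∀ (x : A₀.domain) (f : ℝ → ℂ), ContDiff ℝ (⊤ : ℕ∞) f → HasCompactSupport f →
      ((x : Lp ℂ 2 (volume : Measure ℝ)) : ℝ → ℂ) =ᵐ[volume] f →
      ((A₀ x : Lp ℂ 2 (volume : Measure ℝ)) : ℝ → ℂ)
        =ᵐ[volume] fun ξ => -(1 / (K : ℂ) ^ 2) * deriv (deriv f) ξ) :
    p₀.IsClosable ∧ A₀.IsClosable ∧
    (∀ x : Lp ℂ 2 (volume : Measure ℝ),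
      (∃ hx : x ∈ p₀.closure.domain, p₀.closure ⟨x, hx⟩ ∈ p₀.closure.domain)
        ↔ x ∈ A₀.closure.domain) ∧
    (∀ (x : Lp ℂ 2 (volume : Measure ℝ)) (hx : x ∈ p₀.closure.domain)
        (hx₂ : p₀.closure ⟨x, hx⟩ ∈ p₀.closure.domain) (hxA : x ∈ A₀.closure.domain),
      p₀.closure ⟨p₀.closure ⟨x, hx⟩, hx₂⟩ = A₀.closure ⟨x, hxA⟩) := by
  have hcd : ∀ {f : ℝ → ℂ}, ContDiff ℝ (⊤ : ℕ∞) f → HasCompactSupport f →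
      ContDiff ℝ (⊤ : ℕ∞) (fun ξ => (Complex.I / (K : ℂ)) * deriv f ξ) ∧
      HasCompactSupport (fun ξ => (Complex.I / (K : ℂ)) * deriv f ξ) := fun hf hfc =>
    ⟨contDiff_const.mul (hf.iterate_deriv 1), hfc.deriv.mul_left⟩
  have hAp : ∀ x, x ∈ A₀.domain ↔ x ∈ p₀.domain := fun x => by rw [hp_dom, hA_dom]
  refine abstract_sq p₀ A₀ hAp ?_ ?_ ?_
  · intro x y hxy
    obtain ⟨f, hf, hfc, hxf⟩ := (hp_dom x).1 x.2
    have h1 := hp_apply x f hf hfc hxf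
    obtain ⟨hg, hgc⟩ := hcd hf hfc
    have h : p₀ x ∈ p₀.domain := (hp_dom _).2 ⟨_, hg, hgc, h1⟩
    refine ⟨h, Lp.ext ?_⟩
    filter_upwards [hp_apply ⟨_, h⟩ _ hg hgc h1, hA_apply y f hf hfc (hxy ▸ hxf)] with ξ h2 h3
    have e : ∀ ξ, deriv (fun ξ => (Complex.I / (K : ℂ)) * deriv f ξ) ξ
        = (Complex.I / (K : ℂ)) * deriv (deriv f) ξ := fun ξ => deriv_const_mul_field _
    rw [h2, h3, e, ← mul_assoc, div_mul_div_comm, Complex.I_mul_I]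
    ring
  · intro x y
    obtain ⟨f, hf, hfc, hxf⟩ := (hp_dom x).1 x.2
    obtain ⟨g, hg, hgc, hyg⟩ := (hp_dom y).1 y.2
    have e1 : inner ℂ (p₀ x) (y : Lp ℂ 2 (volume : Measure ℝ)) =
        -(Complex.I / K) * ∫ ξ, g ξ * (starRingEnd ℂ) (deriv f ξ) := by
      rw [L2.inner_def, ← integral_const_mul]
      refine integral_congr_ae ?_
      filter_upwards [hp_apply x f hf hfc hxf, hyg] with ξ h1 h2
      rw [h1, h2, RCLike.inner_apply, map_mul, map_div₀, Complex.conj_I, Complex.conj_ofReal]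
      ring
    have e2 : inner ℂ (x : Lp ℂ 2 (volume : Measure ℝ)) (p₀ y) =
        (Complex.I / K) * ∫ ξ, deriv g ξ * (starRingEnd ℂ) (f ξ) := by
      rw [L2.inner_def, ← integral_const_mul]
      refine integral_congr_ae ?_
      filter_upwards [hp_apply y g hg hgc hyg, hxf] with ξ h1 h2
      rw [h1, h2, RCLike.inner_apply]
      ring
    rw [e1, e2, integral_deriv_parts hf hfc hg]
    ring
  · have hS : {z | ∃ x : A₀.domain, A₀ x + x = z} =
        (LinearMap.range (A₀.toFun + A₀.domain.subtype) : Set (Lp ℂ 2 (volume : Measure ℝ))) := rfl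
    rw [hS, Submodule.dense_iff_topologicalClosure_eq_top,
      Submodule.topologicalClosure_eq_top_iff, Submodule.eq_bot_iff]
    intro u hu
    rw [Submodule.mem_orthogonal'] at hu
    have hz : (fun ξ => (starRingEnd ℂ) (u ξ)) =ᵐ[volume] 0 := by
      refine weak_zero (Lp.memLp u).star (1 / K) fun φ hφ hφc => ?_
      have hm : MemLp φ 2 volume := hφ.continuous.memLp_of_hasCompactSupport hφc
      have hx : hm.toLp φ ∈ A₀.domain := (hA_dom _).2 ⟨φ, hφ, hφc, hm.coeFn_toLp⟩
      have h0 := hu _ ⟨⟨_, hx⟩, rfl⟩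
      change inner ℂ u (A₀ ⟨_, hx⟩ + hm.toLp φ) = 0 at h0
      rw [← h0, L2.inner_def]
      refine integral_congr_ae ?_
      filter_upwards [Lp.coeFn_add (A₀ ⟨_, hx⟩) (hm.toLp φ), hm.coeFn_toLp,
        hA_apply ⟨_, hx⟩ φ hφ hφc hm.coeFn_toLp] with ξ h1 h2 h3
      rw [h1, Pi.add_apply, h2, h3, RCLike.inner_apply]
      push_cast
      ring
    refine Lp.ext ?_
    filter_upwards [hz, Lp.coeFn_zero ℂ 2 (volume : Measure ℝ)] with ξ h1 h2
    rw [h2]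
    exact (map_eq_zero (starRingEnd ℂ)).1 h1
end

section
/- Let K > 0 and K/2 < α < K, and define g₁ : ℝ → ℝ by g₁ = e^{−α·}·χ_{(−∞,0)}. For τ ∈ ℝ let u(τ,ξ) = (1/2)·[ g₁(ξ + τ/K) + g₁(ξ − τ/K) ] be the generalized d'Alembert solution with data (g₁, 0). Then g₁ ∈ L²_ℂ(ℝ, e^{2Kξ}), and for every τ ≥ 0 the weighted L²-norm satisfies ( ∫_ℝ |u(τ,ξ)|² e^{2Kξ} dξ )^{1/2} ≥ (1 / (2·√(2(K−α)))) · e^{((2α−K)/K)·τ}. Since 2α − K > 0, the weighted L²-norm of the solution is exponentially increasing in τ. -/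
open MeasureTheory

/-!
The weighted square `g₁² e^{2Kξ}` is `e^{2(K-α)ξ} χ_{(-∞,0)}`, whose integral is `1 / (2(K-α))`.
Translating by `c` multiplies the integral against `e^{2Kξ}` by `e^{2Kc}`. As both d'Alembert
waves are nonnegative, `u²` dominates `g₁(ξ - τ/K)² / 4`, so with `c = τ/K` the norm of `u(τ,·)` is
at least `e^τ / (2 √(2(K-α)))`. This is stronger than the claim, because `(2α-K)/K < 1`.
Integrability of `u² e^{2Kξ}`, without which the integral would be the junk value `0`, follows from
`(a + b)² ≤ 2 (a² + b²)`.
-/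

/-- For `K/2 < α < K` and data `g₁ = e^{−α·}χ_{(−∞,0)}`, the generalized
d'Alembert solution `u(τ,ξ) = (1/2)[g₁(ξ+τ/K)+g₁(ξ−τ/K)]` has data in the weighted space
`L²_ℂ(ℝ, e^{2Kξ})`, and its weighted `L²`-norm is exponentially increasing in `τ`:
`(∫ |u(τ,ξ)|² e^{2Kξ} dξ)^{1/2} ≥ (1/(2√(2(K−α)))) e^{((2α−K)/K)τ}` for all `τ ≥ 0`. -/
theorem weighted_L2_norm_exponentially_increasing (K α : ℝ) (hK : 0 < K)
    (hα₁ : K / 2 < α) (hα₂ : α < K)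
    (g₁ : ℝ → ℝ)
    (hg₁ : ∀ ξ : ℝ, g₁ ξ = if ξ < 0 then Real.exp (-(α * ξ)) else 0)
    (u : ℝ → ℝ → ℝ)
    (hu : ∀ τ ξ : ℝ, u τ ξ = (1 / 2) * (g₁ (ξ + τ / K) + g₁ (ξ - τ / K))) :
    Integrable (fun ξ : ℝ => g₁ ξ ^ 2 * Real.exp (2 * K * ξ)) (volume : Measure ℝ) ∧
    ∀ τ : ℝ, 0 ≤ τ →
      (1 / (2 * Real.sqrt (2 * (K - α)))) * Real.exp (((2 * α - K) / K) * τ)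
        ≤ Real.sqrt (∫ ξ : ℝ, u τ ξ ^ 2 * Real.exp (2 * K * ξ)) := by
  have hmeas : Measurable g₁ := by
    rw [show g₁ = fun ξ => if ξ < 0 then Real.exp (-(α * ξ)) else 0 from funext hg₁]
    exact Measurable.ite measurableSet_Iio (by fun_prop) measurable_const
  have hnn : ∀ ξ, 0 ≤ g₁ ξ := by
    intro ξ
    rw [hg₁]
    split_ifs <;> positivity
  have hpos : 0 < 2 * (K - α) := by linarith
  have hind : (fun ξ : ℝ => g₁ ξ ^ 2 * Real.exp (2 * K * ξ))
      = (Set.Iio (0 : ℝ)).indicator (fun ξ => Real.exp (2 * (K - α) * ξ)) := by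
    funext ξ
    simp only [hg₁, Set.indicator_apply, Set.mem_Iio]
    split_ifs
    · rw [← Real.exp_nat_mul, ← Real.exp_add]
      congr 1
      push_cast
      ring
    · simp
  have hint : Integrable (fun ξ : ℝ => g₁ ξ ^ 2 * Real.exp (2 * K * ξ)) := by
    rw [hind, integrable_indicator_iff measurableSet_Iio]
    exact (integrableOn_exp_mul_Iic hpos 0).mono_set Set.Iio_subset_Iic_self
  have hval : ∫ ξ : ℝ, g₁ ξ ^ 2 * Real.exp (2 * K * ξ) = 1 / (2 * (K - α)) := by
    rw [hind, integral_indicator measurableSet_Iio, ← integral_Iic_eq_integral_Iio,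
      integral_exp_mul_Iic hpos]
    simp
  have hshift : ∀ c : ℝ, (fun ξ : ℝ => g₁ (ξ - c) ^ 2 * Real.exp (2 * K * ξ))
      = fun ξ => Real.exp (2 * K * c) * (g₁ (ξ - c) ^ 2 * Real.exp (2 * K * (ξ - c))) := by
    intro c
    funext ξ
    rw [mul_left_comm, ← Real.exp_add]
    ring_nf
  have hintS : ∀ c : ℝ, Integrable (fun ξ : ℝ => g₁ (ξ - c) ^ 2 * Real.exp (2 * K * ξ)) := by
    intro c
    rw [hshift c]
    exact (hint.comp_sub_right c).const_mul _
  have hvalS : ∀ c : ℝ, ∫ ξ : ℝ, g₁ (ξ - c) ^ 2 * Real.exp (2 * K * ξ)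
      = Real.exp (2 * K * c) * (1 / (2 * (K - α))) := by
    intro c
    rw [hshift c, integral_const_mul,
      integral_sub_right_eq_self (fun ξ => g₁ ξ ^ 2 * Real.exp (2 * K * ξ)) c, hval]
  refine ⟨hint, fun τ hτ => ?_⟩
  have hintP : Integrable (fun ξ : ℝ => g₁ (ξ + τ / K) ^ 2 * Real.exp (2 * K * ξ)) := by
    simpa only [sub_neg_eq_add] using hintS (-(τ / K))
  have hintU : Integrable (fun ξ : ℝ => u τ ξ ^ 2 * Real.exp (2 * K * ξ)) := by
    refine (hintP.add (hintS (τ / K))).mono' ?_ (Filter.Eventually.of_forall fun ξ => ?_)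
    · simp only [hu]
      exact Measurable.aestronglyMeasurable (by fun_prop)
    · rw [Real.norm_of_nonneg (by positivity), Pi.add_apply, ← add_mul, hu]
      gcongr
      nlinarith [sq_nonneg (g₁ (ξ + τ / K) - g₁ (ξ - τ / K)), sq_nonneg (g₁ (ξ + τ / K)),
        sq_nonneg (g₁ (ξ - τ / K))]
  have hlow : 1 / 4 * (Real.exp (2 * K * (τ / K)) * (1 / (2 * (K - α))))
      ≤ ∫ ξ : ℝ, u τ ξ ^ 2 * Real.exp (2 * K * ξ) := by
    rw [← hvalS, ← integral_const_mul]
    refine integral_mono ((hintS _).const_mul _) hintU fun ξ => ?_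
    simp only [hu]
    rw [← mul_assoc]
    gcongr
    nlinarith [hnn (ξ + τ / K), hnn (ξ - τ / K), mul_nonneg (hnn (ξ + τ / K)) (hnn (ξ - τ / K))]
  refine Real.le_sqrt_of_sq_le (le_trans ?_ hlow)
  have hrate : (2 * α - K) / K * τ ≤ τ := by
    have : (2 * α - K) / K ≤ 1 := by
      rw [div_le_one hK]
      linarith
    nlinarith
  have hexp : Real.exp ((2 * α - K) / K * τ) ^ 2 ≤ Real.exp (2 * K * (τ / K)) := by
    rw [← Real.exp_nat_mul, show 2 * K * (τ / K) = 2 * τ by field_simp]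
    apply Real.exp_le_exp.mpr
    push_cast
    linarith
  rw [mul_pow, div_pow, mul_pow, Real.sq_sqrt hpos.le]
  calc 1 ^ 2 / (2 ^ 2 * (2 * (K - α))) * Real.exp ((2 * α - K) / K * τ) ^ 2
      ≤ 1 ^ 2 / (2 ^ 2 * (2 * (K - α))) * Real.exp (2 * K * (τ / K)) := by gcongr
    _ = 1 / 4 * (Real.exp (2 * K * (τ / K)) * (1 / (2 * (K - α)))) := by
      have : K - α ≠ 0 := by linarith
      field_simp
      norm_num
end
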